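/- Gauss–Lucas theorem: for any nonconstant complex polynomial f, every root of the derivative f' lies in the convex hull of the set of roots of f. -/

import Mathlib

theorem rootSet_self_eq_setOf_isRoot {R : Type*} [CommRing R] [IsDomain R] {p : Polynomial R}
    (hp : p ≠ 0) : p.rootSet R = {x : R | p.IsRoot x} := by
  ext x
  simp [Polynomial.mem_rootSet, hp]

theorem stmt_6 (f : Polynomial ℂ) (hf : 0 < f.natDegree) :
    ∀ z : ℂ, f.derivative.IsRoot z →
      z ∈ convexHull ℝ {w : ℂ | f.IsRoot w} := by
  have hf_ne : f ≠ 0 := Polynomial.ne_zero_of_natDegree_gt hf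
  have hderiv_ne : f.derivative ≠ 0 := mt Polynomial.derivative_eq_zero.mp hf.ne'
  have hsubset := Polynomial.rootSet_derivative_subset_convexHull_rootSet
    (Polynomial.natDegree_pos_iff_degree_pos.mp hf)
  rwa [rootSet_self_eq_setOf_isRoot hderiv_ne, rootSet_self_eq_setOf_isRoot hf_ne] at hsubset
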